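/- Let C be a category with finite products and M a class of morphisms of C that contains all isomorphisms, is closed under composition, and is closed under binary products. If X is an M-coextensive object of C and p : X → A is any product projection of X, then A is M-coextensive. -/

import Mathlib

open CategoryTheory CategoryTheory.Limits

universe v u

variable {C : Type u} [Category.{v} C]

/-- `(p, q)` is a binary product diagram, exhibiting `X` as the product of `A` and `B`. -/
def IsBinaryProduct {X A B : C} (p : X ⟶ A) (q : X ⟶ B) : Prop :=
  Nonempty (IsLimit (BinaryFan.mk p q))

/-- `p : X ⟶ A` is a product projection. -/
def IsProductProjection {X A : C} (p : X ⟶ A) : Prop :=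
  ∃ (B : C) (q : X ⟶ B), IsBinaryProduct p q

/-- A pushout square whose two legs belong to the class `M`. -/
def IsMPushout (M : MorphismProperty C) {Z A B P : C}
    (f : Z ⟶ A) (g : Z ⟶ B) (a : A ⟶ P) (b : B ⟶ P) : Prop :=
  IsPushout f g a b ∧ M a ∧ M b

/-- `X` is an `M`-coextensive object. -/
structure MCoextensive (M : MorphismProperty C) (X : C) : Prop where
  pushout_exists : ∀ ⦃Y A : C⦄ (m : X ⟶ Y) (p : X ⟶ A), M m → IsProductProjection p →
    ∃ (P : C) (a : A ⟶ P) (b : Y ⟶ P), IsMPushout M p m a b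
  isBinaryProduct_iff : ∀ ⦃A₁ A₂ Y B₁ B₂ : C⦄ (π₁ : X ⟶ A₁) (π₂ : X ⟶ A₂)
    (f : X ⟶ Y) (p₁ : A₁ ⟶ B₁) (p₂ : A₂ ⟶ B₂) (π₁' : Y ⟶ B₁) (π₂' : Y ⟶ B₂),
    IsBinaryProduct π₁ π₂ → M f → M p₁ → M p₂ →
    π₁ ≫ p₁ = f ≫ π₁' → π₂ ≫ p₂ = f ≫ π₂' →
    (IsBinaryProduct π₁' π₂' ↔ (IsMPushout M π₁ f p₁ π₁' ∧ IsMPushout M π₂ f p₂ π₂'))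

/-- The class of product projections. -/
def projections (C : Type u) [Category.{v} C] : MorphismProperty C :=
  fun _ _ f => IsProductProjection f

/-- `X` is projection-coextensive. -/
def ProjectionCoextensive (X : C) : Prop := MCoextensive (projections C) X

/-- `f` is a regular epimorphism (a coequalizer of some parallel pair). -/
def IsRegularEpimorphism {X Y : C} (f : X ⟶ Y) : Prop :=
  ∃ (W : C) (a b : W ⟶ X) (h : a ≫ f = b ≫ f), Nonempty (IsColimit (Cofork.ofπ f h))

/-- The class of regular epimorphisms. -/
def regularEpis (C : Type u) [Category.{v} C] : MorphismProperty C :=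
  fun _ _ f => IsRegularEpimorphism f

/-- `X` is regularly-coextensive. -/
def RegularlyCoextensive (X : C) : Prop := MCoextensive (regularEpis C) X

/-- A regular category: finitely complete, coequalizers of kernel pairs, and
regular epimorphisms are stable under pullback. -/
class IsRegularCategory (C : Type u) [Category.{v} C] [HasFiniteLimits C] : Prop where
  hasCoequalizer_kernelPair : ∀ {X Y : C} (f : X ⟶ Y),
    HasCoequalizer (pullback.fst f f) (pullback.snd f f)
  regularEpi_stable : ∀ {X Y Z : C} (f : X ⟶ Y) (g : Z ⟶ Y),
    IsRegularEpimorphism f → IsRegularEpimorphism (pullback.snd f g)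

/-- `X` has global support: the unique morphism to the terminal object is a regular epi. -/
def HasGlobalSupport [HasTerminal C] (X : C) : Prop :=
  IsRegularEpimorphism (terminal.from X)

/-!
Let `X` be `M`-coextensive with product diagram `p : X ⟶ A`, `q : X ⟶ B`. Comparing `(p, q)` with
itself shows that `p` belongs to `M`. The pushouts `P` and `Q` of `p` and `q` along `X ⟶ ⊤_ C` form
a product diagram `P ⟵ ⊤_ C ⟶ Q`, so both are terminal and `A ⟶ ⊤_ C`, `B ⟶ ⊤_ C` belong to `M`.
Hence `(p, q)` may be compared with `A ⟵ A ⟶ ⊤_ C`; this exhibits the square `p, p, 𝟙, 𝟙` as a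
pushout, so `p` is epic. The pushout of `p` along a composite `p ≫ g` is then `g` itself, whence `g`
belongs to `M` as soon as `p ≫ g` does.

Precomposing a span with the epimorphism `p` does not change its pushouts, so those of `A` are found
among those of `X`. A product diagram `A₁ ⟵ A ⟶ A₂` yields a product diagram `A₁ ⟵ X ⟶ A₂ ⨯ B`,
whose second leg has `A ⟶ A₂` as its pushout along `p`; by the pasting law the condition on `X`
becomes the condition on `A`.
-/

theorem isPushout_epi_comp_iff {W X Y Z P : C} (h : W ⟶ X) [Epi h] {f : X ⟶ Y} {g : X ⟶ Z}
    {i : Y ⟶ P} {j : Z ⟶ P} :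
    IsPushout (h ≫ f) (h ≫ g) i j ↔ IsPushout f g i j := by
  have paste (w : f ≫ i = g ≫ j) :
      IsPushout (h ≫ f) (h ≫ g) (𝟙 Y ≫ i) j ↔ IsPushout f g i j :=
    (IsPushout.of_vert_isIso_epi ⟨Category.comp_id _⟩).paste_vert_iff w
  rw [Category.id_comp] at paste
  refine ⟨fun sq ↦ (paste ?_).1 sq, fun sq ↦ (paste sq.w).2 sq⟩
  simpa only [Category.assoc, cancel_epi] using sq.w

namespace IsBinaryProduct

variable {X A B : C} {p : X ⟶ A} {q : X ⟶ B}

theorem swap (h : IsBinaryProduct p q) : IsBinaryProduct q p :=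
  h.map BinaryFan.isLimitFlip

theorem isProductProjection_fst (h : IsBinaryProduct p q) : IsProductProjection p :=
  ⟨B, q, h⟩

theorem isProductProjection_snd (h : IsBinaryProduct p q) : IsProductProjection q :=
  h.swap.isProductProjection_fst

theorem isSplitEpi_fst (h : IsBinaryProduct p q) (f : A ⟶ B) : IsSplitEpi p := by
  obtain ⟨hl⟩ := h
  exact .mk' ⟨BinaryFan.IsLimit.lift hl (𝟙 A) f, BinaryFan.IsLimit.lift_fst hl _ _⟩

theorem assoc [HasBinaryProducts C] {A₁ A₂ : C} {π₁ : A ⟶ A₁} {π₂ : A ⟶ A₂}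
    (h : IsBinaryProduct p q) (hA : IsBinaryProduct π₁ π₂) :
    IsBinaryProduct (p ≫ π₁) (prod.lift (p ≫ π₂) q) := by
  obtain ⟨hl⟩ := h
  obtain ⟨hAl⟩ := hA
  exact ⟨hAl.assoc (limit.isLimit (pair A₂ B)) hl⟩

end IsBinaryProduct

theorem IsProductProjection.comp [HasBinaryProducts C] {X A A₁ : C} {p : X ⟶ A} {π : A ⟶ A₁}
    (hp : IsProductProjection p) (hπ : IsProductProjection π) : IsProductProjection (p ≫ π) := by
  obtain ⟨B, q, h⟩ := hp
  obtain ⟨A₂, π₂, hA⟩ := hπ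
  exact (h.assoc hA).isProductProjection_fst

theorem isBinaryProduct_id_terminalFrom [HasTerminal C] (X : C) :
    IsBinaryProduct (𝟙 X) (terminal.from X) :=
  (BinaryFan.isLimit_iff_isIso_fst terminalIsTerminal _).2 (inferInstanceAs (IsIso (𝟙 X)))

namespace MCoextensive

variable {M : MorphismProperty C} {X A B : C} {p : X ⟶ A} {q : X ⟶ B}

theorem prop_of_isProductProjection [M.ContainsIdentities] (hX : MCoextensive M X)
    (hp : IsProductProjection p) : M p := by
  obtain ⟨B, q, h⟩ := hp
  obtain ⟨⟨-, -, hpM⟩, -⟩ := (hX.isBinaryProduct_iff p q (𝟙 X) (𝟙 A) (𝟙 B) p q h (M.id_mem X)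
    (M.id_mem A) (M.id_mem B) (by simp) (by simp)).1 h
  exact hpM

section HasTerminal

variable [HasTerminal C] [M.ContainsIdentities] [M.RespectsIso]

theorem prop_terminalFrom (hX : MCoextensive M X) (hp : IsProductProjection p) :
    M (terminal.from A) := by
  obtain ⟨B, q, h⟩ := hp
  have ht : M (terminal.from X) :=
    hX.prop_of_isProductProjection (isBinaryProduct_id_terminalFrom X).isProductProjection_snd
  obtain ⟨P, a, b, hP⟩ := hX.pushout_exists (terminal.from X) p ht h.isProductProjection_fst
  obtain ⟨Q, c, d, hQ⟩ := hX.pushout_exists (terminal.from X) q ht h.isProductProjection_snd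
  have hbd : IsBinaryProduct b d := (hX.isBinaryProduct_iff p q (terminal.from X) a c b d h ht
    hP.2.1 hQ.2.1 hP.1.w hQ.1.w).2 ⟨hP, hQ⟩
  have : IsSplitEpi b := hbd.isSplitEpi_fst (terminal.from P ≫ d)
  have : IsIso b := isIso_of_mono_of_isSplitEpi b
  rw [Subsingleton.elim (terminal.from A) (a ≫ inv b), M.cancel_right_of_respectsIso]
  exact hP.2.1

theorem epi_of_isProductProjection (hX : MCoextensive M X) (hp : IsProductProjection p) :
    Epi p := by
  obtain ⟨B, q, h⟩ := hp
  obtain ⟨⟨sq, -⟩, -⟩ := (hX.isBinaryProduct_iff p q p (𝟙 A) (terminal.from B) (𝟙 A)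
    (terminal.from A) h (hX.prop_of_isProductProjection h.isProductProjection_fst) (M.id_mem A)
    (hX.prop_terminalFrom h.isProductProjection_snd) rfl (Subsingleton.elim _ _)).1
      (isBinaryProduct_id_terminalFrom A)
  exact PushoutCocone.epi_of_isColimitMkIdId p sq.isColimit

theorem prop_of_isProductProjection_comp {Y : C} (hX : MCoextensive M X)
    (hp : IsProductProjection p) {g : A ⟶ Y} (hpg : M (p ≫ g)) : M g := by
  have : Epi p := hX.epi_of_isProductProjection hp
  obtain ⟨_, _, _, sq, ha, -⟩ := hX.pushout_exists (p ≫ g) p hpg hp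
  have sq' : IsPushout p (p ≫ g) g (𝟙 Y) := .of_horiz_isIso_epi ⟨(Category.comp_id _).symm⟩
  rwa [← sq.inl_isoIsPushout_hom _ _ sq', M.cancel_right_of_respectsIso]

end HasTerminal

section HasFiniteProducts

variable [HasFiniteProducts C]

theorem prop_prodFst [M.ContainsIdentities] [M.RespectsIso] {A₂ : C} {π₂ : A ⟶ A₂}
    (hX : MCoextensive M X) (h : IsBinaryProduct p q) (hπ₂ : IsProductProjection π₂) :
    M (prod.fst : A₂ ⨯ B ⟶ A₂) := by
  obtain ⟨A₁, π₁, hA⟩ := hπ₂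
  apply hX.prop_of_isProductProjection_comp (h.assoc hA.swap).isProductProjection_snd
  rw [prod.lift_fst]
  exact hX.prop_of_isProductProjection (h.assoc hA).isProductProjection_fst

theorem isPushout_lift_fst [M.ContainsIdentities] [M.RespectsIso] {A₂ : C} {π₂ : A ⟶ A₂}
    (hX : MCoextensive M X) (h : IsBinaryProduct p q) (hπ₂ : IsProductProjection π₂) :
    IsPushout (prod.lift (p ≫ π₂) q) p prod.fst π₂ := by
  have hfst : M (prod.fst : A₂ ⨯ B ⟶ A₂) := hX.prop_prodFst h hπ₂
  obtain ⟨A₁, π₁, hA⟩ := hπ₂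
  obtain ⟨-, sq, -⟩ := (hX.isBinaryProduct_iff (p ≫ π₁) (prod.lift (p ≫ π₂) q) p (𝟙 A₁) prod.fst
    π₁ π₂ (h.assoc hA.swap) (hX.prop_of_isProductProjection h.isProductProjection_fst) (M.id_mem A₁)
    hfst (Category.comp_id _) (prod.lift_fst _ _)).1 hA.swap
  exact sq

theorem exists_isMPushout_of_isProductProjection [M.IsMultiplicative] [M.RespectsIso]
    {A₁ Y : C} {π : A ⟶ A₁} {m : A ⟶ Y} (hX : MCoextensive M X) (hp : IsProductProjection p)
    (hπ : IsProductProjection π) (hm : M m) :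
    ∃ (P : C) (a : A₁ ⟶ P) (b : Y ⟶ P), IsMPushout M π m a b := by
  have : Epi p := hX.epi_of_isProductProjection hp
  have hpm : M (p ≫ m) := M.comp_mem _ _ (hX.prop_of_isProductProjection hp) hm
  obtain ⟨P, a, b, sq, hab⟩ := hX.pushout_exists (p ≫ m) (p ≫ π) hpm (hp.comp hπ)
  exact ⟨P, a, b, (isPushout_epi_comp_iff p).1 sq, hab⟩

theorem isBinaryProduct_iff_of_isProductProjection [M.IsMultiplicative] [M.RespectsIso]
    {A₁ A₂ Y B₁ B₂ : C} {π₁ : A ⟶ A₁} {π₂ : A ⟶ A₂} {f : A ⟶ Y} {p₁ : A₁ ⟶ B₁} {p₂ : A₂ ⟶ B₂}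
    {π₁' : Y ⟶ B₁} {π₂' : Y ⟶ B₂} (hX : MCoextensive M X) (hp : IsProductProjection p)
    (hA : IsBinaryProduct π₁ π₂) (hf : M f) (h₁ : M p₁) (h₂ : M p₂)
    (w₁ : π₁ ≫ p₁ = f ≫ π₁') (w₂ : π₂ ≫ p₂ = f ≫ π₂') :
    IsBinaryProduct π₁' π₂' ↔ IsMPushout M π₁ f p₁ π₁' ∧ IsMPushout M π₂ f p₂ π₂' := by
  have : Epi p := hX.epi_of_isProductProjection hp
  have hpf : M (p ≫ f) := M.comp_mem _ _ (hX.prop_of_isProductProjection hp) hf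
  obtain ⟨B, q, h⟩ := hp
  have hfst : M (prod.fst ≫ p₂ : A₂ ⨯ B ⟶ B₂) :=
    M.comp_mem _ _ (hX.prop_prodFst h hA.isProductProjection_snd) h₂
  have square₁ : IsMPushout M (p ≫ π₁) (p ≫ f) p₁ π₁' ↔ IsMPushout M π₁ f p₁ π₁' :=
    and_congr_left' (isPushout_epi_comp_iff p)
  have square₂ : IsMPushout M (prod.lift (p ≫ π₂) q) (p ≫ f) (prod.fst ≫ p₂) π₂' ↔
      IsMPushout M π₂ f p₂ π₂' :=
    and_congr ((hX.isPushout_lift_fst h hA.isProductProjection_snd).paste_vert_iff w₂)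
      (and_congr_left' (iff_of_true hfst h₂))
  rw [← square₁, ← square₂]
  exact hX.isBinaryProduct_iff _ _ _ _ _ _ _ (h.assoc hA) hpf h₁ hfst
    (by simp [w₁]) (by simp [prod.lift_fst_assoc, w₂])

end HasFiniteProducts

end MCoextensive

theorem mCoextensive_of_productProjection_general [HasFiniteProducts C] {M : MorphismProperty C}
    (hiso : ∀ ⦃A B : C⦄ (f : A ⟶ B), IsIso f → M f)
    (hcomp : ∀ ⦃A B D : C⦄ (f : A ⟶ B) (g : B ⟶ D), M f → M g → M (f ≫ g))
    {X A : C} (hX : MCoextensive M X) {p : X ⟶ A} (hp : IsProductProjection p) :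
    MCoextensive M A := by
  have : M.IsMultiplicative := { id_mem := fun _ ↦ hiso _ inferInstance, comp_mem := @hcomp }
  have : M.RespectsIso := MorphismProperty.respectsIso_of_isStableUnderComposition hiso
  constructor
  · intro Y A₁ m π hm hπ
    exact hX.exists_isMPushout_of_isProductProjection hp hπ hm
  · intro A₁ A₂ Y B₁ B₂ π₁ π₂ f p₁ p₂ π₁' π₂'
    exact hX.isBinaryProduct_iff_of_isProductProjection hp

/-- `M`-coextensivity is inherited by the factors of an `M`-coextensive object. -/
theorem mCoextensive_of_productProjection
    {C : Type u} [Category.{v} C] [HasFiniteProducts C] (M : MorphismProperty C)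
    (hiso : ∀ ⦃A B : C⦄ (f : A ⟶ B), IsIso f → M f)
    (hcomp : ∀ ⦃A B D : C⦄ (f : A ⟶ B) (g : B ⟶ D), M f → M g → M (f ≫ g))
    (hprod : ∀ ⦃A B A' B' : C⦄ (f : A ⟶ B) (g : A' ⟶ B'), M f → M g → M (prod.map f g))
    (X : C) (hX : MCoextensive M X)
    {A : C} (p : X ⟶ A) (hp : IsProductProjection p) : MCoextensive M A :=
  mCoextensive_of_productProjection_general hiso hcomp hX hp
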